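/- There exists an absolute constant K such that for every finite set A of positive real numbers with |A| ≥ 2, one has |A·A|^{10} · |A+A|^9 ≥ K · |A|^{24} / (log|A|)^2. -/

import Mathlib

open Finset Pointwise

noncomputable def dlt (X Y : Finset ℝ) (s : ℝ) : ℕ :=
  ((X ×ˢ Y).filter (fun p => p.1 - p.2 = s)).card

noncomputable def sg (X Y : Finset ℝ) (s : ℝ) : ℕ :=
  ((X ×ˢ Y).filter (fun p => p.1 + p.2 = s)).card

noncomputable def En (X Y : Finset ℝ) : ℝ :=
  ∑ s ∈ X - X, (dlt X X s : ℝ) * (dlt Y Y s : ℝ)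

noncomputable def E3 (X : Finset ℝ) : ℝ :=
  ∑ s ∈ X - X, (dlt X X s : ℝ) ^ 3

noncomputable def E15 (X : Finset ℝ) : ℝ :=
  ∑ s ∈ X - X, (dlt X X s : ℝ) ^ ((3 : ℝ) / 2)

open scoped Combinatorics.Additive

theorem dlt_eq_card_filter_add (X Y : Finset ℝ) (s : ℝ) :
    dlt X Y s = (Y.filter (fun y => y + s ∈ X)).card := by
  unfold dlt
  refine card_bij (fun p _ => p.2) ?_ ?_ ?_
  · rintro ⟨x, y⟩ h
    simp only [mem_filter, mem_product] at h ⊢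
    have : y + s = x := by linarith [h.2]
    exact ⟨h.1.2, this ▸ h.1.1⟩
  · rintro ⟨x, y⟩ h ⟨x', y'⟩ h' e
    simp only [mem_filter, mem_product] at h h' e
    ext <;> simp only <;> linarith [h.2, h'.2]
  · intro y h
    simp only [mem_filter] at h
    exact ⟨(y + s, y), by simp [h.1, h.2], rfl⟩

theorem card_le_card_left_of_le_dlt {X Y : Finset ℝ} {s : ℝ} {t : ℕ} (h : t ≤ dlt X Y s) :
    t ≤ X.card := by
  rw [dlt_eq_card_filter_add] at h
  refine h.trans (card_le_card_of_injOn (fun y => y + s) ?_ ?_)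
  · intro y hy
    exact (mem_filter.1 hy).2
  · intro y _ y' _ e
    simpa using e

theorem card_le_card_right_of_le_dlt {X Y : Finset ℝ} {s : ℝ} {t : ℕ} (h : t ≤ dlt X Y s) :
    t ≤ Y.card := by
  rw [dlt_eq_card_filter_add] at h
  exact h.trans (card_filter_le _ _)

/-- The number of pairs on which `f` agrees is the second moment of its fibre sizes. -/
theorem card_filter_eq_sum_sq {α β : Type*} [DecidableEq β] (X : Finset α) (Y : Finset β)
    (f : α → β) (hf : ∀ x ∈ X, f x ∈ Y) :
    ((X ×ˢ X).filter (fun p => f p.1 = f p.2)).card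
      = ∑ y ∈ Y, (X.filter (fun x => f x = y)).card ^ 2 := by
  rw [card_eq_sum_card_fiberwise (f := fun p : α × α => f p.1) (t := Y)]
  · refine sum_congr rfl fun y _ => ?_
    rw [sq, ← card_product]
    congr 1
    ext p
    simp only [mem_filter, mem_product]
    constructor
    · rintro ⟨⟨⟨h1, h2⟩, h3⟩, h4⟩
      exact ⟨⟨h1, h4⟩, h2, h3 ▸ h4⟩
    · rintro ⟨⟨h1, h2⟩, h3, h4⟩
      exact ⟨⟨⟨h1, h3⟩, h2.trans h4.symm⟩, h2⟩
  · intro p hp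
    simp only [mem_coe, mem_filter, mem_product] at hp
    exact hf _ hp.1.1

theorem card_le_card_offDiag_filter_add {α : Type*} [DecidableEq α] (X : Finset α) (f : α → ℕ)
    (m : ℕ) (hf : ∀ x ∈ X, f x < m) :
    X.card ≤ (X.offDiag.filter (fun p => f p.1 = f p.2)).card + m := by
  have h1 := card_filter_eq_sum_sq X (range m) f (fun x hx => mem_range.2 (hf x hx))
  have h2 : X.card = ∑ y ∈ range m, (X.filter (fun x => f x = y)).card :=
    card_eq_sum_card_fiberwise (fun x hx => by simpa using hf x hx)
  have h3 : 2 * X.card ≤ ((X ×ˢ X).filter (fun p => f p.1 = f p.2)).card + m := by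
    have : ∑ y ∈ range m, 2 * (X.filter (fun x => f x = y)).card
        ≤ ∑ y ∈ range m, ((X.filter (fun x => f x = y)).card ^ 2 + 1) :=
      sum_le_sum fun y _ => by
        zify
        nlinarith [sq_nonneg (((X.filter (fun x => f x = y)).card : ℤ) - 1)]
    rw [← mul_sum, ← h2, sum_add_distrib, ← h1] at this
    simpa using this
  have h4 : ((X ×ˢ X).filter (fun p => f p.1 = f p.2)).card
      ≤ (X.offDiag.filter (fun p => f p.1 = f p.2)).card + X.card := by
    rw [← diag_card X]
    refine le_trans (card_le_card ?_) (card_union_le _ _)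
    rintro ⟨x, y⟩ h
    simp only [mem_filter, mem_product, mem_union, mem_offDiag, mem_diag] at h ⊢
    tauto
  omega

/-- A finite set of reals can be cut into consecutive blocks of at most `w` elements. -/
theorem exists_monotone_blocks (B : Finset ℝ) (w : ℕ) (hw : 0 < w) :
    ∃ β : ℝ → ℕ, Monotone β ∧ (∀ b, β b * w ≤ B.card) ∧
      ((B ×ˢ B).filter (fun p => β p.1 = β p.2)).card ≤ B.card * w := by
  set rk : ℝ → ℕ := fun x => (B.filter (fun y => y < x)).card with hrk
  have rk_mono : Monotone rk := fun x y hxy =>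
    card_le_card fun z hz => by
      simp only [mem_filter] at hz ⊢
      exact ⟨hz.1, hz.2.trans_le hxy⟩
  have rk_lt : ∀ x ∈ B, ∀ y, x < y → rk x < rk y := fun x hx y hxy =>
    card_lt_card <| by
      rw [ssubset_iff_of_subset]
      · exact ⟨x, by simp [hx, hxy], by simp⟩
      · intro z hz
        simp only [mem_filter] at hz ⊢
        exact ⟨hz.1, hz.2.trans hxy⟩
  refine ⟨fun x => rk x / w, fun x y h => Nat.div_le_div_right (rk_mono h), ?_, ?_⟩
  · intro b
    exact (Nat.div_mul_le_self _ _).trans (card_filter_le _ _)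
  · rw [card_eq_sum_card_fiberwise (f := fun p : ℝ × ℝ => p.1) (t := B)]
    · rw [← smul_eq_mul]
      refine sum_le_card_nsmul _ _ _ fun b _ => ?_
      have hcard : (Ico (rk b / w * w) (rk b / w * w + w)).card = w := by simp
      refine (card_le_card_of_injOn (fun p => rk p.2) ?_ ?_).trans hcard.le
      · rintro ⟨x, y⟩ h
        simp only [coe_filter, Set.mem_ofPred_eq, mem_filter, mem_product] at h
        obtain ⟨⟨_, h1⟩, rfl⟩ := h
        have h2 : rk x / w = rk y / w := h1
        simp only [coe_Ico, Set.mem_Ico, h2]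
        exact ⟨Nat.div_mul_le_self _ _, Nat.lt_div_mul_add hw⟩
      · rintro ⟨x, y⟩ h ⟨x', y'⟩ h' e
        simp only [coe_filter, Set.mem_ofPred_eq, mem_filter, mem_product] at h h' e
        have hy : y = y' := by
          rcases lt_trichotomy y y' with hlt | heq | hlt
          · exact absurd e (rk_lt y h.1.1.2 y' hlt).ne
          · exact heq
          · exact absurd e (rk_lt y' h'.1.1.2 y hlt).ne'
        rw [Prod.mk.injEq]
        exact ⟨h.2.trans h'.2.symm, hy⟩
    · intro p hp
      simp only [mem_coe, mem_filter, mem_product] at hp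
      exact hp.1.1

/-- An incidence bound of Szemerédi–Trotter strength for the lines `y = c (x + s)` and the grid
`B × (A * C)`: it bounds the number of popular differences of `A` and `B`. -/
theorem card_popular_differences_le (A B C T : Finset ℝ) (hA : ∀ a ∈ A, 0 < a)
    (hC : ∀ c ∈ C, 0 < c) (t : ℕ) (ht : 1 ≤ t) (hT : ∀ s ∈ T, t ≤ dlt A B s) :
    T.card * C.card * t ^ 3 ≤ 100 * B.card ^ 2 * (A * C).card ^ 2 := by
  rcases C.eq_empty_or_nonempty with rfl | ⟨c₀, hc₀⟩
  · simp
  rcases T.eq_empty_or_nonempty with rfl | ⟨s₀, hs₀⟩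
  · simp
  have htB : t ≤ B.card := card_le_card_right_of_le_dlt (hT s₀ hs₀)
  have hAD : A.card ≤ (A * C).card := 
    card_le_card_of_injOn (· * c₀) (fun a ha => mul_mem_mul ha hc₀)
      (mul_left_injective₀ (hC c₀ hc₀).ne').injOn
  have htD : t ≤ (A * C).card := (card_le_card_left_of_le_dlt (hT s₀ hs₀)).trans hAD
  obtain ⟨a₀, ha₀⟩ : A.Nonempty := card_pos.1 (ht.trans (card_le_card_left_of_le_dlt (hT s₀ hs₀)))
  have hCD : C.card ≤ (A * C).card :=
    card_le_card_of_injOn (a₀ * ·) (fun c hc => mul_mem_mul ha₀ hc)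
      (mul_right_injective₀ (hA a₀ ha₀).ne').injOn
  set D := A * C with hD
  rcases ht.eq_or_lt with rfl | ht2
  · have hTAB : T.card ≤ A.card * B.card := by
      rw [← card_product]
      refine (card_le_card ?_).trans (card_image_le (f := fun p : ℝ × ℝ => p.1 - p.2))
      intro s hs
      obtain ⟨p, hp⟩ := card_pos.1 (hT s hs)
      exact mem_image.2 ⟨p, (mem_filter.1 hp).1, (mem_filter.1 hp).2⟩
    calc T.card * C.card * 1 ^ 3 ≤ (D.card * B.card) * D.card * 1 ^ 3 := by
          gcongr
          exact hTAB.trans (by gcongr)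
      _ = 1 * B.card ^ 1 * D.card ^ 2 := by ring
      _ ≤ 100 * B.card ^ 2 * D.card ^ 2 := by gcongr <;> omega
  have block : ∀ E : Finset ℝ, t ≤ E.card → ∃ β : ℝ → ℕ, Monotone β ∧ (∀ b, 4 * β b < t) ∧
      ((E ×ˢ E).filter (fun p => β p.1 = β p.2)).card * t ≤ 5 * E.card ^ 2 := by
    intro E hE
    have hlt : 4 * E.card < (4 * E.card / t + 1) * t := by
      rw [add_mul, one_mul]
      exact Nat.lt_div_mul_add (by omega)
    obtain ⟨β, h1, h2, h3⟩ := exists_monotone_blocks E (4 * E.card / t + 1) (Nat.succ_pos _)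
    refine ⟨β, h1, fun b => ?_, ?_⟩
    · by_contra! hb
      have := h2 b
      nlinarith [Nat.mul_le_mul_right (4 * E.card / t + 1) hb]
    · calc _ ≤ E.card * (4 * E.card / t + 1) * t := by gcongr
        _ = E.card * (4 * E.card / t * t + t) := by ring
        _ ≤ E.card * (4 * E.card + E.card) :=
          Nat.mul_le_mul_left _ (add_le_add (Nat.div_mul_le_self _ _) hE)
        _ = _ := by ring
  obtain ⟨β, hβm, hβ, hβB⟩ := block B htB
  obtain ⟨γ, hγm, hγ, hγD⟩ := block D htD
  set P : ℝ × ℝ → Finset (ℝ × ℝ) := fun q =>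
    (B.filter (fun b => b + q.1 ∈ A)).offDiag.filter
      (fun p => β p.1 + γ ((p.1 + q.1) * q.2) = β p.2 + γ ((p.2 + q.1) * q.2)) with hP
  have hPcard : ∀ q ∈ T ×ˢ C, t ≤ 4 * (P q).card := by
    intro q hq
    have h1 := hT q.1 (mem_product.1 hq).1
    rw [dlt_eq_card_filter_add] at h1
    have h2 := card_le_card_offDiag_filter_add (B.filter (fun b => b + q.1 ∈ A))
      (fun b => β b + γ ((b + q.1) * q.2)) ((t - 1) / 2 + 1) (fun b _ => by
        have := hβ b
        have := hγ ((b + q.1) * q.2)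
        omega)
    change _ ≤ (P q).card + _ at h2
    omega
  have hsum : T.card * C.card * t ≤ 4 * ((T ×ˢ C).sigma P).card := by
    rw [card_sigma, mul_sum, ← card_product, ← smul_eq_mul]
    exact card_nsmul_le_sum _ _ _ hPcard
  have hinj : ((T ×ˢ C).sigma P).card ≤
      (((B ×ˢ B).filter (fun p => β p.1 = β p.2)) ×ˢ
        ((D ×ˢ D).filter (fun p => γ p.1 = γ p.2))).card := by
    refine card_le_card_of_injOn
      (fun z => (z.2, ((z.2.1 + z.1.1) * z.1.2, (z.2.2 + z.1.1) * z.1.2))) ?_ ?_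
    · rintro ⟨⟨s, c⟩, ⟨b, b'⟩⟩ h
      simp only [hP, mem_coe, mem_sigma, mem_product, mem_filter, mem_offDiag] at h ⊢
      obtain ⟨⟨_, hc⟩, ⟨⟨hb, hba⟩, ⟨hb', hba'⟩, _⟩, he⟩ := h
      have hc0 := (hC c hc).le
      have hboth : β b = β b' ∧ γ ((b + s) * c) = γ ((b' + s) * c) := by
        rcases le_total b b' with hle | hle
        · have e1 := hβm hle
          have e2 : γ ((b + s) * c) ≤ γ ((b' + s) * c) := hγm (by gcongr)
          omega
        · have e1 := hβm hle
          have e2 : γ ((b' + s) * c) ≤ γ ((b + s) * c) := hγm (by gcongr)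
          omega
      exact ⟨⟨⟨hb, hb'⟩, hboth.1⟩, ⟨mul_mem_mul hba hc, mul_mem_mul hba' hc⟩, hboth.2⟩
    · rintro ⟨⟨s, c⟩, ⟨b, b'⟩⟩ h ⟨⟨s', c'⟩, ⟨d, d'⟩⟩ h' e
      simp only [hP, mem_coe, mem_sigma, mem_product, mem_filter, mem_offDiag] at h h'
      simp only [Prod.mk.injEq] at e
      obtain ⟨⟨rfl, rfl⟩, e1, e2⟩ := e
      have hne : b - b' ≠ 0 := sub_ne_zero.2 h.2.1.2.2
      obtain rfl : c = c' := mul_left_cancel₀ hne (by linear_combination e1 - e2)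
      have hc0 := (hC c h.1.2).ne'
      have := mul_right_cancel₀ hc0 e1
      obtain rfl : s = s' := by linarith
      rfl
  rw [card_product] at hinj
  set U := ((B ×ˢ B).filter (fun p => β p.1 = β p.2)).card
  set V := ((D ×ˢ D).filter (fun p => γ p.1 = γ p.2)).card
  calc T.card * C.card * t ^ 3 = (T.card * C.card * t) * t ^ 2 := by ring
    _ ≤ 4 * (U * V) * t ^ 2 := Nat.mul_le_mul_right _ (hsum.trans (Nat.mul_le_mul_left _ hinj))
    _ = 4 * (U * t) * (V * t) := by ring
    _ ≤ 4 * (5 * B.card ^ 2) * (5 * D.card ^ 2) := by gcongr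
    _ = _ := by ring

/-- Layer-cake summation against the counting function of the values of `r`. -/
theorem sum_layers {ι : Type*} (X : Finset ι) (r : ι → ℕ) (J : Finset ℕ) (w : ℕ → ℝ) :
    ∑ x ∈ X, ∑ j ∈ J.filter (fun j => j ≤ r x), w j
      = ∑ j ∈ J, ((X.filter (fun x => j ≤ r x)).card : ℝ) * w j := by
  simp_rw [sum_filter]
  rw [sum_comm]
  refine sum_congr rfl fun j _ => ?_
  rw [← sum_filter, sum_const, nsmul_eq_mul]

theorem sum_sq_tail_le {ι : Type*} (X : Finset ι) (r : ι → ℕ) (M : ℝ)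
    (h : ∀ t : ℕ, 1 ≤ t → ((X.filter (fun x => t ≤ r x)).card : ℝ) * (t : ℝ) ^ 3 ≤ M)
    (Δ : ℝ) (hΔ : 0 < Δ) :
    ∑ x ∈ X.filter (fun x => Δ < r x), (r x : ℝ) ^ 2 ≤ 3 * M / Δ := by
  have hM : 0 ≤ M := le_trans (by positivity) (h 1 le_rfl)
  set k := ⌊Δ⌋₊ + 1 with hk
  have hΔk : Δ < k := by rw [hk]; exact_mod_cast Nat.lt_floor_add_one Δ
  have hfil : X.filter (fun x => Δ < r x) = X.filter (fun x => k ≤ r x) := by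
    refine filter_congr fun x _ => ?_
    rw [hk, Nat.succ_le_iff, Nat.floor_lt hΔ.le]
  set N := max (X.sup r) k with hN
  set Y := X.filter (fun x => k ≤ r x) with hY
  have hk0 : (0 : ℝ) < k := hΔ.trans hΔk
  have pointwise : ∀ x ∈ Y, (r x : ℝ) ^ 2
      ≤ (k : ℝ) ^ 2 + ∑ j ∈ (Ioc k N).filter (fun j => j ≤ r x), 2 * (j : ℝ) := by
    intro x hx
    have hrN : r x ≤ N := (le_sup (mem_filter.1 hx).1).trans (le_max_left _ _)
    have heq : (Ioc k N).filter (fun j => j ≤ r x) = Ioc k (r x) := by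
      ext j
      simp only [mem_filter, mem_Ioc]
      omega
    rw [heq]
    refine Nat.le_induction (by simp) (fun n hn ih => ?_) (r x) (mem_filter.1 hx).2
    rw [sum_Ioc_succ_top hn]
    push_cast
    linarith
  have layer : ∀ j ∈ Ioc k N, ((Y.filter (fun x => j ≤ r x)).card : ℝ) * (2 * (j : ℝ))
      ≤ 2 * M * ((j : ℝ) ^ 2)⁻¹ := by
    intro j hj
    have hj1 : 1 ≤ j := by have := (mem_Ioc.1 hj).1; omega
    have hj0 : (0 : ℝ) < j := by exact_mod_cast hj1
    have h1 := h j hj1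
    have h2 : ((Y.filter (fun x => j ≤ r x)).card : ℝ) ≤ (X.filter (fun x => j ≤ r x)).card := by
      exact_mod_cast card_le_card (filter_subset_filter _ (filter_subset _ _))
    rw [← div_eq_mul_inv, le_div_iff₀ (by positivity)]
    calc _ = 2 * (((Y.filter (fun x => j ≤ r x)).card : ℝ) * (j : ℝ) ^ 3) := by ring
      _ ≤ 2 * (((X.filter (fun x => j ≤ r x)).card : ℝ) * (j : ℝ) ^ 3) := by gcongr
      _ ≤ 2 * M := by linarith
  rw [hfil]
  calc ∑ x ∈ Y, (r x : ℝ) ^ 2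
      ≤ ∑ x ∈ Y, ((k : ℝ) ^ 2 + ∑ j ∈ (Ioc k N).filter (fun j => j ≤ r x), 2 * (j : ℝ)) :=
        sum_le_sum pointwise
    _ = (Y.card : ℝ) * (k : ℝ) ^ 2
          + ∑ j ∈ Ioc k N, ((Y.filter (fun x => j ≤ r x)).card : ℝ) * (2 * (j : ℝ)) := by
        rw [sum_add_distrib, sum_layers, sum_const, nsmul_eq_mul]
    _ ≤ M / k + 2 * M * (1 / k) := by
        refine add_le_add ?_ ((sum_le_sum layer).trans ?_)
        · rw [le_div_iff₀ hk0]
          linarith [h k (by omega), show (Y.card : ℝ) * k ^ 2 * k = Y.card * k ^ 3 by ring]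
        · rw [← mul_sum]
          refine mul_le_mul_of_nonneg_left ?_ (by positivity)
          refine (sum_Ioc_inv_sq_le_sub (by omega) (le_max_right _ _)).trans ?_
          rw [one_div]
          exact sub_le_self _ (by positivity)
    _ = 3 * M / k := by ring
    _ ≤ 3 * M / Δ := by gcongr

theorem sum_cube_le {ι : Type*} (X : Finset ι) (r : ι → ℕ) (M : ℝ) (N : ℕ)
    (h : ∀ t : ℕ, 1 ≤ t → ((X.filter (fun x => t ≤ r x)).card : ℝ) * (t : ℝ) ^ 3 ≤ M)
    (hN : ∀ x ∈ X, r x ≤ N) :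
    ∑ x ∈ X, (r x : ℝ) ^ 3 ≤ 3 * M * (1 + Real.log N) := by
  have hM : 0 ≤ M := le_trans (by positivity) (h 1 le_rfl)
  have pointwise : ∀ x ∈ X, (r x : ℝ) ^ 3
      ≤ ∑ j ∈ (Icc 1 N).filter (fun j => j ≤ r x), 3 * (j : ℝ) ^ 2 := by
    intro x hx
    have hrN := hN x hx
    have heq : (Icc 1 N).filter (fun j => j ≤ r x) = Icc 1 (r x) := by
      ext j
      simp only [mem_filter, mem_Icc]
      omega
    rw [heq]
    induction r x with
    | zero => simp
    | succ n ih =>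
      rw [sum_Icc_succ_top (by omega)]
      push_cast
      nlinarith [ih, (Nat.cast_nonneg n : (0 : ℝ) ≤ n)]
  have layer : ∀ j ∈ Icc 1 N, ((X.filter (fun x => j ≤ r x)).card : ℝ) * (3 * (j : ℝ) ^ 2)
      ≤ 3 * M * (j : ℝ)⁻¹ := by
    intro j hj
    have hj1 := (mem_Icc.1 hj).1
    have hj0 : (0 : ℝ) < j := by exact_mod_cast hj1
    rw [← div_eq_mul_inv, le_div_iff₀ hj0]
    linarith [h j hj1, show ((X.filter (fun x => j ≤ r x)).card : ℝ) * (3 * (j : ℝ) ^ 2) * j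
      = 3 * (((X.filter (fun x => j ≤ r x)).card : ℝ) * (j : ℝ) ^ 3) by ring]
  have hharm : ∑ j ∈ Icc 1 N, (j : ℝ)⁻¹ ≤ 1 + Real.log N := by
    have := harmonic_le_one_add_log N
    rw [harmonic_eq_sum_Icc] at this
    push_cast at this
    exact this
  calc ∑ x ∈ X, (r x : ℝ) ^ 3
      ≤ ∑ x ∈ X, ∑ j ∈ (Icc 1 N).filter (fun j => j ≤ r x), 3 * (j : ℝ) ^ 2 :=
        sum_le_sum pointwise
    _ = ∑ j ∈ Icc 1 N, ((X.filter (fun x => j ≤ r x)).card : ℝ) * (3 * (j : ℝ) ^ 2) :=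
        sum_layers _ _ _ _
    _ ≤ ∑ j ∈ Icc 1 N, 3 * M * (j : ℝ)⁻¹ := sum_le_sum layer
    _ ≤ 3 * M * (1 + Real.log N) := by
        rw [← mul_sum]
        gcongr

theorem sum_dlt (X Y : Finset ℝ) : ∑ s ∈ X - Y, dlt X Y s = X.card * Y.card := by
  rw [← card_product]
  exact (card_eq_sum_card_fiberwise (f := fun p : ℝ × ℝ => p.1 - p.2)
    (fun p hp => sub_mem_sub (mem_product.1 hp).1 (mem_product.1 hp).2)).symm

theorem sum_dlt_sq (X Y : Finset ℝ) : ∑ s ∈ X - Y, dlt X Y s ^ 2 =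
    (((X ×ˢ Y) ×ˢ (X ×ˢ Y)).filter (fun p => p.1.1 - p.1.2 = p.2.1 - p.2.2)).card :=
  (card_filter_eq_sum_sq (X ×ˢ Y) (X - Y) (fun p : ℝ × ℝ => p.1 - p.2)
    (fun _ hp => sub_mem_sub (mem_product.1 hp).1 (mem_product.1 hp).2)).symm

theorem card_pow_four_le (A : Finset ℝ) :
    A.card ^ 4 ≤ (A + A).card * ∑ s ∈ A - A, dlt A A s ^ 2 := by
  have h : E[A, A] ≤ ∑ s ∈ A - A, dlt A A s ^ 2 := by
    rw [sum_dlt_sq]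
    refine card_le_card_of_injOn (fun z => ((z.1.1, z.1.2), (z.2.2, z.2.1))) ?_ ?_
    · rintro ⟨⟨a, a'⟩, ⟨b, b'⟩⟩ h
      simp only [mem_coe, mem_filter, mem_product] at h ⊢
      exact ⟨⟨h.1.1, h.1.2.2, h.1.2.1⟩, by linarith [h.2]⟩
    · rintro ⟨⟨a, a'⟩, ⟨b, b'⟩⟩ _ ⟨⟨c, c'⟩, ⟨d, d'⟩⟩ _ e
      simp only [Prod.mk.injEq] at e ⊢
      tauto
  calc A.card ^ 4 = A.card ^ 2 * A.card ^ 2 := by ring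
    _ ≤ (A + A).card * E[A, A] := le_card_add_mul_addEnergy A A
    _ ≤ _ := by gcongr

theorem sum_addEnergy_slice_le (A T : Finset ℝ) :
    ∑ s ∈ T, E[A, A.filter (fun b => b + s ∈ A)] ≤ ∑ t ∈ A - A, dlt A A t ^ 3 := by
  set R : ℝ → Finset (ℝ × ℝ) := fun t => (A ×ˢ A).filter (fun p => p.1 - p.2 = t) with hR
  have hcard : ∀ t, (R t ×ˢ R t ×ˢ R t).card = dlt A A t ^ 3 := by
    intro t
    rw [card_product, card_product]
    change dlt A A t * (dlt A A t * dlt A A t) = _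
    ring
  simp_rw [← hcard, addEnergy, ← card_sigma]
  refine card_le_card_of_injOn (fun z => ⟨z.2.1.1 - z.2.1.2, (z.2.1.1, z.2.1.2),
    (z.2.2.2, z.2.2.1), (z.2.2.2 + z.1, z.2.2.1 + z.1)⟩) ?_ ?_
  · rintro ⟨s, ⟨⟨a, a'⟩, ⟨b, b'⟩⟩⟩ h
    simp only [hR, mem_coe, mem_sigma, mem_filter, mem_product] at h ⊢
    obtain ⟨_, ⟨⟨h1, h2⟩, ⟨h3, h4⟩, ⟨h5, h6⟩⟩, h7⟩ := h
    exact ⟨sub_mem_sub h1 h2, ⟨⟨h1, h2⟩, trivial⟩, ⟨⟨h5, h3⟩, by linarith⟩, ⟨h6, h4⟩, by linarith⟩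
  · rintro ⟨s, ⟨⟨a, a'⟩, ⟨b, b'⟩⟩⟩ _ ⟨s', ⟨⟨c, c'⟩, ⟨d, d'⟩⟩⟩ _ e
    simp only [Sigma.mk.injEq, heq_eq_eq, Prod.mk.injEq] at e
    obtain ⟨_, ⟨rfl, rfl⟩, ⟨rfl, rfl⟩, h, _⟩ := e
    obtain rfl : s = s' := by linarith
    rfl

theorem sum_dlt_mul_card_add_slice_le (A T : Finset ℝ) :
    ∑ s ∈ T, dlt A A s * (A + A.filter (fun b => b + s ∈ A)).card
      ≤ ∑ x ∈ A - (A + A), dlt A (A + A) x ^ 2 := by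
  simp_rw [sum_dlt_sq, dlt_eq_card_filter_add, ← card_product, ← card_sigma]
  refine card_le_card_of_injOn
    (fun z => ((z.2.1 + z.1, z.2.2 + z.1), (z.2.1, z.2.2))) ?_ ?_
  · rintro ⟨s, ⟨b, y⟩⟩ h
    simp only [mem_coe, mem_sigma, mem_filter, mem_product, mem_add] at h ⊢
    obtain ⟨_, ⟨hb, hbs⟩, a, ha, c, ⟨hc, hcs⟩, rfl⟩ := h
    exact ⟨⟨⟨hbs, a, ha, c + s, hcs, by ring⟩, hb, a, ha, c, hc, rfl⟩, by ring⟩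
  · rintro ⟨s, ⟨b, y⟩⟩ _ ⟨s', ⟨b', y'⟩⟩ _ e
    simp only [Prod.mk.injEq] at e
    obtain ⟨⟨h, _⟩, rfl, rfl⟩ := e
    obtain rfl : s = s' := by linarith
    rfl

/-- Truncated second moment bound (Schoen–Shkredov): on differences of multiplicity at most `τ`,
the second moment is controlled by the third moment and the energy of `A` with `A + A`. -/
theorem sq_sum_dlt_sq_le (A : Finset ℝ) (τ : ℝ) (hτ : 0 ≤ τ) :
    (A.card : ℝ) ^ 2 * (∑ s ∈ (A - A).filter (fun s => (dlt A A s : ℝ) ≤ τ),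
        (dlt A A s : ℝ) ^ 2) ^ 2
      ≤ τ * (∑ s ∈ A - A, (dlt A A s : ℝ) ^ 3)
        * ∑ x ∈ A - (A + A), (dlt A (A + A) x : ℝ) ^ 2 := by
  set T := (A - A).filter (fun s => (dlt A A s : ℝ) ≤ τ) with hT
  set Q : ℝ → Finset ℝ := fun s => A.filter (fun b => b + s ∈ A) with hQ
  have hCS := sum_sq_le_sum_mul_sum_of_sq_le_mul T
    (r := fun s => (A.card : ℝ) * (dlt A A s : ℝ) ^ 2)
    (f := fun s => (dlt A A s : ℝ) * (E[A, Q s] : ℝ))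
    (g := fun s => (dlt A A s : ℝ) * ((A + Q s).card : ℝ))
    (fun _ _ => by positivity) (fun _ _ => by positivity) (fun s _ => by
      have h1 : ((A.card : ℝ) ^ 2 * (dlt A A s : ℝ) ^ 2) ≤ (A + Q s).card * E[A, Q s] := by
        have := le_card_add_mul_addEnergy A (Q s)
        rw [← dlt_eq_card_filter_add A A s] at this
        exact_mod_cast this
      nlinarith [mul_le_mul_of_nonneg_left h1 (sq_nonneg (dlt A A s : ℝ))])
  rw [← mul_sum, mul_pow] at hCS
  refine hCS.trans (mul_le_mul ?_ ?_ (sum_nonneg fun _ _ => by positivity)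
    (mul_nonneg hτ (sum_nonneg fun _ _ => by positivity)))
  · calc ∑ s ∈ T, (dlt A A s : ℝ) * (E[A, Q s] : ℝ) ≤ ∑ s ∈ T, τ * (E[A, Q s] : ℝ) :=
          sum_le_sum fun s hs => by
            gcongr
            exact (mem_filter.1 hs).2
      _ ≤ _ := by
          rw [← mul_sum]
          gcongr
          exact_mod_cast sum_addEnergy_slice_le A T
  · exact_mod_cast sum_dlt_mul_card_add_slice_le A T

theorem card_popular_mul_cube_le (A B : Finset ℝ) (hA : ∀ a ∈ A, 0 < a) (hne : A.Nonempty)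
    (X : Finset ℝ) (t : ℕ) (ht : 1 ≤ t) :
    ((X.filter (fun s => t ≤ dlt A B s)).card : ℝ) * (t : ℝ) ^ 3
      ≤ 100 * (B.card : ℝ) ^ 2 * ((A * A).card : ℝ) ^ 2 / A.card := by
  have hn : (0 : ℝ) < A.card := by exact_mod_cast hne.card_pos
  rw [le_div_iff₀ hn]
  have h := card_popular_differences_le A B A (X.filter (fun s => t ≤ dlt A B s)) hA hA t ht
    (fun s hs => (mem_filter.1 hs).2)
  have h' : ((X.filter (fun s => t ≤ dlt A B s)).card : ℝ) * A.card * (t : ℝ) ^ 3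
      ≤ 100 * (B.card : ℝ) ^ 2 * ((A * A).card : ℝ) ^ 2 := by exact_mod_cast h
  linarith

theorem sum_dlt_cube_le (A : Finset ℝ) (hA : ∀ a ∈ A, 0 < a) (hne : A.Nonempty) :
    ∑ s ∈ A - A, (dlt A A s : ℝ) ^ 3
      ≤ 300 * A.card * ((A * A).card : ℝ) ^ 2 * (1 + Real.log A.card) := by
  have hn : (0 : ℝ) < A.card := by exact_mod_cast hne.card_pos
  refine (sum_cube_le (A - A) (dlt A A) _ A.card
    (card_popular_mul_cube_le A A hA hne (A - A))
    (fun _ _ => card_le_card_left_of_le_dlt le_rfl)).trans (le_of_eq ?_)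
  field_simp
  ring

/-- The energy of `A` with `A + A`, bounded through the product set. -/
theorem sum_dlt_add_sq_le (A : Finset ℝ) (hA : ∀ a ∈ A, 0 < a) (hne : A.Nonempty) :
    ∑ x ∈ A - (A + A), (dlt A (A + A) x : ℝ) ^ 2
      ≤ 301 * (A * A).card * ((A + A).card * √(A + A).card) := by
  have hn : (0 : ℝ) < A.card := by exact_mod_cast hne.card_pos
  have hP : (0 : ℝ) < (A * A).card := by exact_mod_cast (hne.mul hne).card_pos
  have hS : (0 : ℝ) < (A + A).card := by exact_mod_cast (hne.add hne).card_pos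
  have hfirst : ∑ x ∈ A - (A + A), (dlt A (A + A) x : ℝ) = A.card * (A + A).card := by
    exact_mod_cast sum_dlt A (A + A)
  have hq : 0 < √((A + A).card : ℝ) := Real.sqrt_pos.2 hS
  have hqq : √((A + A).card : ℝ) ^ 2 = (A + A).card := Real.sq_sqrt hS.le
  have htail := sum_sq_tail_le (A - (A + A)) (dlt A (A + A)) _
    (card_popular_mul_cube_le A (A + A) hA hne (A - (A + A)))
    ((A * A).card * √((A + A).card : ℝ) / A.card) (by positivity)
  set n := (A.card : ℝ)
  set P := ((A * A).card : ℝ)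
  set S := ((A + A).card : ℝ)
  set q := √S
  set Δ := P * q / n with hΔ
  have hΔ0 : 0 < Δ := by positivity
  have hhead : ∑ x ∈ (A - (A + A)).filter (fun x => ¬ Δ < (dlt A (A + A) x : ℝ)),
      (dlt A (A + A) x : ℝ) ^ 2 ≤ Δ * (n * S) := by
    rw [← hfirst, mul_sum]
    refine (sum_le_sum (g := fun x => Δ * (dlt A (A + A) x : ℝ)) fun x hx => ?_).trans
      (sum_le_sum_of_subset_of_nonneg (filter_subset _ _) fun _ _ _ => by positivity)
    rw [sq]
    exact mul_le_mul_of_nonneg_right (not_lt.1 (mem_filter.1 hx).2) (Nat.cast_nonneg _)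
  rw [← sum_filter_add_sum_filter_not (A - (A + A)) (fun x => Δ < (dlt A (A + A) x : ℝ))]
  refine (add_le_add htail hhead).trans (le_of_eq ?_)
  rw [hΔ]
  field_simp
  rw [← hqq]
  ring

theorem card_pow_twelve_le (A : Finset ℝ) (hA : ∀ a ∈ A, 0 < a) (hne : A.Nonempty) :
    (A.card : ℝ) ^ 12 ≤ 216720000 * ((A * A).card : ℝ) ^ 5 * ((A + A).card : ℝ) ^ 4
      * √(A + A).card * (1 + Real.log A.card) := by
  have hn : (0 : ℝ) < A.card := by exact_mod_cast hne.card_pos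
  have hP : (0 : ℝ) < (A * A).card := by exact_mod_cast (hne.mul hne).card_pos
  have hS : (0 : ℝ) < (A + A).card := by exact_mod_cast (hne.add hne).card_pos
  have hL : 0 ≤ 1 + Real.log (A.card : ℝ) := by positivity
  have henergy : (A.card : ℝ) ^ 4 ≤ (A + A).card * ∑ s ∈ A - A, (dlt A A s : ℝ) ^ 2 := by
    exact_mod_cast card_pow_four_le A
  set τ : ℝ := 600 * ((A * A).card : ℝ) ^ 2 * (A + A).card / (A.card : ℝ) ^ 3 with hτ
  have hτ0 : 0 < τ := by positivity
  have htail := sum_sq_tail_le (A - A) (dlt A A) _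
    (card_popular_mul_cube_le A A hA hne (A - A)) τ hτ0
  have hmain := sq_sum_dlt_sq_le A τ hτ0.le
  have hcube := sum_dlt_cube_le A hA hne
  have hmix := sum_dlt_add_sq_le A hA hne
  rw [← sum_filter_add_sum_filter_not (A - A) (fun s => τ < (dlt A A s : ℝ))] at henergy
  simp only [not_lt] at henergy
  set n := (A.card : ℝ)
  set P := ((A * A).card : ℝ)
  set S := ((A + A).card : ℝ)
  set L := 1 + Real.log n
  set Z := ∑ s ∈ (A - A).filter (fun s => (dlt A A s : ℝ) ≤ τ), (dlt A A s : ℝ) ^ 2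
  have htail' : 3 * (100 * n ^ 2 * P ^ 2 / n) / τ = n ^ 4 / (2 * S) := by
    rw [hτ]
    field_simp
    norm_num
  rw [htail'] at htail
  have hZ : n ^ 4 / (2 * S) ≤ Z := by
    have h1 := (div_le_iff₀' hS).2 henergy
    have h2 : n ^ 4 / S = n ^ 4 / (2 * S) + n ^ 4 / (2 * S) := by
      field_simp
      norm_num
    linarith
  have hchain : n ^ 2 * (n ^ 4 / (2 * S)) ^ 2
      ≤ τ * (300 * n * P ^ 2 * L) * (301 * P * (S * √S)) := by
    calc n ^ 2 * (n ^ 4 / (2 * S)) ^ 2 ≤ n ^ 2 * Z ^ 2 := by gcongr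
      _ ≤ _ := hmain
      _ ≤ _ := by gcongr
  have hclear : n ^ 2 * (n ^ 4 / (2 * S)) ^ 2 * (4 * S ^ 2 * n ^ 2) = n ^ 12 := by
    field_simp
    norm_num
  rw [← hclear]
  refine (mul_le_mul_of_nonneg_right hchain (by positivity)).trans (le_of_eq ?_)
  rw [hτ]
  field_simp
  ring

theorem stmt18 : ∃ K : ℝ, 0 < K ∧
    ∀ A : Finset ℝ, (∀ a ∈ A, 0 < a) → 2 ≤ A.card →
    ((A * A).card : ℝ) ^ 10 * ((A + A).card : ℝ) ^ 9 ≥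
      K * (A.card : ℝ) ^ 24 / (Real.log A.card) ^ 2 := by
  refine ⟨1 / (3 * 216720000) ^ 2, by norm_num, fun A hA hcard => ?_⟩
  have hne : A.Nonempty := card_pos.1 (by omega)
  have hn : (2 : ℝ) ≤ A.card := by exact_mod_cast hcard
  have hlog : Real.log 2 ≤ Real.log A.card := Real.log_le_log (by norm_num) hn
  have hlog2 := Real.log_two_gt_d9
  have hl : 0 < Real.log (A.card : ℝ) := by linarith
  have hS : (0 : ℝ) ≤ (A + A).card := Nat.cast_nonneg _
  have h := card_pow_twelve_le A hA hne
  have h3 : (A.card : ℝ) ^ 12 ≤ 216720000 * ((A * A).card : ℝ) ^ 5 * ((A + A).card : ℝ) ^ 4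
      * √(A + A).card * (3 * Real.log A.card) :=
    h.trans (by gcongr; linarith)
  have h4 := pow_le_pow_left₀ (by positivity) h3 2
  rw [ge_iff_le, div_le_iff₀ (by positivity), one_div, inv_mul_le_iff₀ (by norm_num)]
  calc (A.card : ℝ) ^ 24 = ((A.card : ℝ) ^ 12) ^ 2 := by ring
    _ ≤ _ := h4
    _ = (3 * 216720000) ^ 2 * (((A * A).card : ℝ) ^ 10 * (((A + A).card : ℝ) ^ 8
          * √((A + A).card : ℝ) ^ 2) * Real.log A.card ^ 2) := by ring
    _ = _ := by
        rw [Real.sq_sqrt hS]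
        ring
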